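/- Define d⁺ : [0,∞) × [0,∞) → [0,∞) by d⁺(p,q) = max{p,q} if p ≠ q and d⁺(p,q) = 0 otherwise. Then d⁺ is an ultrametric on [0,∞) and the center of distances of the ultrametric space ([0,∞), d⁺) equals {0}. -/

import Mathlib

open scoped Classical NNReal

/-- The Delhommé–Laflamme–Pouzet–Sauer distance on `[0,∞)`:
`d⁺(p,q) = max {p,q}` if `p ≠ q`, and `d⁺(p,q) = 0` otherwise. -/
noncomputable def dplus (p q : ℝ≥0) : ℝ :=
  if p = q then 0 else max (p : ℝ) (q : ℝ)

/-- `d` is an ultrametric on `V`: it is symmetric, vanishes exactly on the diagonal,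
is positive off the diagonal, and satisfies the strong triangle inequality. -/
def IsUltrametricOn {V : Type*} (d : V → V → ℝ) : Prop :=
  (∀ u v, d u v = d v u) ∧ (∀ u, d u u = 0) ∧ (∀ u v, u ≠ v → 0 < d u v) ∧
    (∀ x y z, d x y ≤ max (d x z) (d z y))

/-!
Every point other than `p` lies at `d⁺`-distance at least `p` from `p`. Hence a positive `t` is
not a distance from any `p > t`, and only `0` can be attained from every point.
-/

theorem dplus_self (p : ℝ≥0) : dplus p p = 0 :=
  if_pos rfl

theorem dplus_of_ne {p q : ℝ≥0} (hpq : p ≠ q) : dplus p q = max (p : ℝ) q :=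
  if_neg hpq

theorem dplus_comm (p q : ℝ≥0) : dplus p q = dplus q p := by
  simp only [dplus, eq_comm, max_comm]

theorem dplus_pos {p q : ℝ≥0} (hpq : p ≠ q) : 0 < dplus p q :=
  calc (0 : ℝ) ≤ min (p : ℝ) q := le_min p.coe_nonneg q.coe_nonneg
    _ < max (p : ℝ) q := min_lt_max.2 (NNReal.coe_injective.ne hpq)
    _ = dplus p q := (dplus_of_ne hpq).symm

theorem dplus_le_max (p q : ℝ≥0) : dplus p q ≤ max (p : ℝ) q := by
  rcases eq_or_ne p q with rfl | hpq
  · rw [dplus_self, max_self]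
    exact p.coe_nonneg
  · exact (dplus_of_ne hpq).le

theorem left_le_dplus {p q : ℝ≥0} (hpq : p ≠ q) : (p : ℝ) ≤ dplus p q :=
  dplus_of_ne hpq ▸ le_max_left _ _

theorem right_le_dplus {p q : ℝ≥0} (hpq : p ≠ q) : (q : ℝ) ≤ dplus p q :=
  dplus_of_ne hpq ▸ le_max_right _ _

theorem dplus_le_max_dplus (p q r : ℝ≥0) : dplus p q ≤ max (dplus p r) (dplus r q) := by
  rcases eq_or_ne p r with rfl | hpr
  · exact le_max_right _ _
  rcases eq_or_ne r q with rfl | hrq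
  · exact le_max_left _ _
  calc dplus p q ≤ max (p : ℝ) q := dplus_le_max p q
    _ ≤ max (dplus p r) (dplus r q) := max_le_max (left_le_dplus hpr) (right_le_dplus hrq)

theorem isUltrametricOn_dplus : IsUltrametricOn dplus :=
  ⟨dplus_comm, dplus_self, fun _ _ ↦ dplus_pos, dplus_le_max_dplus⟩

theorem exists_forall_ne_lt_dplus (t : ℝ) : ∃ p : ℝ≥0, ∀ q, q ≠ p → t < dplus p q := by
  obtain ⟨n, hn⟩ := exists_nat_gt t
  exact ⟨n, fun q hqn ↦ hn.trans_le (left_le_dplus hqn.symm)⟩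

/-- The center of distances `C(V)` of a space `V` with distance function `d`: the values of `d`
that are attained from every point of `V`. The axioms of a metric are not built in. -/
def centerOfDistances {V : Type*} (d : V → V → ℝ) : Set ℝ :=
  {t | (∃ x y, d x y = t) ∧ ∀ p, ∃ x, d p x = t}

theorem zero_mem_centerOfDistances {V : Type*} [Nonempty V] {d : V → V → ℝ}
    (d_self : ∀ p, d p p = 0) : 0 ∈ centerOfDistances d :=
  have ⟨p⟩ := ‹Nonempty V›
  ⟨⟨p, p, d_self p⟩, fun q ↦ ⟨q, d_self q⟩⟩

theorem centerOfDistances_eq_singleton_zero {V : Type*} {d : V → V → ℝ}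
    (d_self : ∀ p, d p p = 0) (exists_far : ∀ t, ∃ p, ∀ q, q ≠ p → t < d p q) :
    centerOfDistances d = {0} := by
  obtain ⟨p₀, -⟩ := exists_far 0
  have : Nonempty V := ⟨p₀⟩
  refine Set.eq_singleton_iff_unique_mem.2 ⟨zero_mem_centerOfDistances d_self, ?_⟩
  rintro t ⟨-, attained⟩
  obtain ⟨p, hp⟩ := exists_far t
  obtain ⟨q, rfl⟩ := attained p
  have hqp : q = p := by
    by_contra hne
    exact (hp q hne).false
  rw [hqp, d_self]

/-- The map `d⁺` is an ultrametric on `[0,∞)` and the center of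
distances of the ultrametric space `([0,∞), d⁺)` equals `{0}`. -/
theorem dplus_isUltrametric_and_center_eq_zero :
    IsUltrametricOn dplus ∧
      {t : ℝ | (∃ x y : ℝ≥0, dplus x y = t) ∧ ∀ p : ℝ≥0, ∃ x : ℝ≥0, dplus p x = t}
        = {0} :=
  ⟨isUltrametricOn_dplus,
    centerOfDistances_eq_singleton_zero dplus_self exists_forall_ne_lt_dplus⟩
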